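/- Let φ = (1+√5)/2 and define R(x) = 1 if 1 ≤ x < φ, R(x) = 3/2 if φ ≤ x < 2, and R(x) = ⌊x⌋ if x ≥ 2. Let v > 0 and let S be a finite multiset of real numbers, each at least 1, containing at least one element y with φ ≤ y < 2. If 1 + ∑_{x ∈ S} x > φ·v, then ∑_{x ∈ S} R(x) + 1/2 > v. -/

import Mathlib

/-!
STATEMENT 11: For the rounding function `R` from the paper's LPT analysis:
if a finite multiset `S` of reals, each at least `1`, contains a medium job
(an element of `[φ, 2)`) and `1 + ∑_{x ∈ S} x > φ·v` for some `v > 0`, then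
`∑_{x ∈ S} R x + 1/2 > v`, where `φ = (1+√5)/2`.
-/

/-- The rounding function from the paper's analysis of LPT:
`R x = 1` if `1 ≤ x < φ`, `R x = 3/2` if `φ ≤ x < 2`, `R x = ⌊x⌋` if `x ≥ 2`,
where `φ = (1+√5)/2`. -/
noncomputable def R (x : ℝ) : ℝ :=
  if x < (1 + Real.sqrt 5) / 2 then 1
  else if x < 2 then 3 / 2
  else (⌊x⌋ : ℝ)

/-!
Rounding loses at most a factor `φ` on every job: `x ≤ φ * R x`. A medium job `y` leaves enough
slack to absorb the extra `1`, because `1 + y < 3 < 2 * φ = φ * (R y + 1 / 2)`.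
-/

section

open scoped goldenRatio

theorem three_halves_lt_goldenRatio : 3 / 2 < φ := by
  have : 2 < √5 := Real.lt_sqrt_of_sq_lt (by norm_num)
  unfold Real.goldenRatio
  linarith

theorem R_of_lt_goldenRatio {x : ℝ} (hx : x < φ) : R x = 1 :=
  if_pos hx

theorem R_of_mem_Ico {x : ℝ} (hx : x ∈ Set.Ico φ 2) : R x = 3 / 2 := by
  rw [R, if_neg hx.1.not_gt, if_pos hx.2]

theorem R_of_two_le {x : ℝ} (hx : 2 ≤ x) : R x = ⌊x⌋ := by
  rw [R, if_neg (Real.goldenRatio_lt_two.trans_le hx).not_gt, if_neg hx.not_gt]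

theorem lt_three_halves_mul_floor {K : Type*} [Field K] [LinearOrder K] [IsStrictOrderedRing K]
    [FloorRing K] {x : K} (hx : 2 ≤ x) : x < 3 / 2 * ⌊x⌋ := by
  have hceil : (⌈(2 / 3 : K) / (1 - 2 / 3)⌉ : K) ≤ x := by norm_num [hx]
  linarith [Int.mul_lt_floor (by norm_num) (by norm_num) hceil]

theorem le_goldenRatio_mul_R (x : ℝ) : x ≤ φ * R x := by
  have hφ := three_halves_lt_goldenRatio
  rcases lt_or_ge x φ with hsmall | hφx
  · rw [R_of_lt_goldenRatio hsmall, mul_one]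
    exact hsmall.le
  rcases lt_or_ge x 2 with hx2 | hbig
  · rw [R_of_mem_Ico ⟨hφx, hx2⟩]
    linarith
  · have hfloor : (0 : ℝ) ≤ ⌊x⌋ := by exact_mod_cast Int.floor_nonneg.2 (by linarith)
    rw [R_of_two_le hbig]
    calc
      x ≤ 3 / 2 * ⌊x⌋ := (lt_three_halves_mul_floor hbig).le
      _ ≤ φ * ⌊x⌋ := mul_le_mul_of_nonneg_right hφ.le hfloor

theorem one_add_lt_goldenRatio_mul_R_add_half {y : ℝ} (hy : y ∈ Set.Ico φ 2) :
    1 + y < φ * (R y + 1 / 2) := by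
  rw [R_of_mem_Ico hy]
  linarith [hy.2, three_halves_lt_goldenRatio]

theorem sum_le_goldenRatio_mul_sum_map_R (S : Multiset ℝ) : S.sum ≤ φ * (S.map R).sum :=
  calc
    S.sum ≤ (S.map fun x ↦ φ * R x).sum :=
      Multiset.sum_le_sum_map _ fun x _ ↦ le_goldenRatio_mul_R x
    _ = φ * (S.map R).sum := Multiset.sum_map_mul_left

theorem one_add_sum_lt_goldenRatio_mul_sum_map_R_add_half {S : Multiset ℝ} {y : ℝ}
    (hyS : y ∈ S) (hy : y ∈ Set.Ico φ 2) : 1 + S.sum < φ * ((S.map R).sum + 1 / 2) := by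
  obtain ⟨T, rfl⟩ := Multiset.exists_cons_of_mem hyS
  simp only [Multiset.map_cons, Multiset.sum_cons]
  calc
    1 + (y + T.sum) = (1 + y) + T.sum := by ring
    _ < φ * (R y + 1 / 2) + φ * (T.map R).sum :=
      add_lt_add_of_lt_of_le (one_add_lt_goldenRatio_mul_R_add_half hy)
        (sum_le_goldenRatio_mul_sum_map_R T)
    _ = φ * (R y + (T.map R).sum + 1 / 2) := by ring

end

/-- If `S` (a finite multiset of reals, each at least `1`) contains a medium
job `y ∈ [φ, 2)` and `1 + ∑_{x ∈ S} x > φ·v`, then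
`∑_{x ∈ S} R x + 1/2 > v`. -/
theorem medium_job_rounded_bound (v : ℝ) (hv : 0 < v)
    (S : Multiset ℝ) (hS : ∀ x ∈ S, (1 : ℝ) ≤ x)
    (hmed : ∃ y ∈ S, (1 + Real.sqrt 5) / 2 ≤ y ∧ y < 2)
    (h : 1 + S.sum > (1 + Real.sqrt 5) / 2 * v) :
    (S.map R).sum + 1 / 2 > v := by
  obtain ⟨y, hyS, hy⟩ := hmed
  exact lt_of_mul_lt_mul_left
    (h.trans (one_add_sum_lt_goldenRatio_mul_sum_map_R_add_half hyS hy))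
    Real.goldenRatio_pos.le
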